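/- Let K, L ⊆ ℝ^d be convex bodies, let a ∈ K, b ∈ L, let δ ≥ 1, and let T : ℝ^d → ℝ^d be an invertible linear map such that L − b ⊆ T(K − a) ⊆ δ·(L − b). Then for every positive integer m, |γ_m(K) − γ_m(L)| ≤ δ − 1. -/

import Mathlib

open Set Pointwise

section Defs

variable {V : Type*} [NormedAddCommGroup V] [NormedSpace ℝ V]

/-- A convex body: compact, convex, with nonempty interior. -/
def IsConvexBody (K : Set V) : Prop :=
  IsCompact K ∧ Convex ℝ K ∧ (interior K).Nonempty

/-- `K` can be covered by `m` homothets of ratio `lam`. -/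
def CoversWith (K : Set V) (lam : ℝ) (m : ℕ) : Prop :=
  ∃ t : Fin m → V, K ⊆ ⋃ i, (fun x => lam • x + t i) '' K

/-- The `m`-covering number `γ_m(K)`. -/
noncomputable def gammaC (m : ℕ) (K : Set V) : ℝ :=
  sInf {lam : ℝ | 0 < lam ∧ CoversWith K lam m}

/-- The covering index `coin(K)`. -/
noncomputable def coin (K : Set V) : ℝ :=
  sInf {r : ℝ | ∃ m : ℕ, 0 < m ∧ gammaC m K ≤ 1 / 2 ∧ r = (m : ℝ) / (1 - gammaC m K)}

/-- The weak covering index `wcoin(K)`. -/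
noncomputable def wcoin (K : Set V) : ℝ :=
  sInf {r : ℝ | ∃ m : ℕ, 0 < m ∧ gammaC m K < 1 ∧ r = (m : ℝ) / (1 - gammaC m K)}

/-- `N_λ(K)`: the least number of translates of `λ • K` needed to cover `K`. -/
noncomputable def covN (lam : ℝ) (K : Set V) : ℕ :=
  sInf {n : ℕ | CoversWith K lam n}

/-- A convex body is tightly covered if for every `0 < λ < 1` it contains `N_λ(K)`
points no two of which lie in a common homothet `λ • K + t`. -/
def TightlyCovered (K : Set V) : Prop :=
  ∀ lam : ℝ, 0 < lam → lam < 1 →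
    ∃ p : Fin (covN lam K) → V, (∀ i, p i ∈ K) ∧
      ∀ i j, i ≠ j → ∀ t : V,
        ¬(p i ∈ (fun x => lam • x + t) '' K ∧ p j ∈ (fun x => lam • x + t) '' K)

/-- The covering parameter `C(K)` of Swanepoel. -/
noncomputable def covParam (K : Set V) : ℝ :=
  sInf {r : ℝ | ∃ k : ℕ, ∃ lam : Fin k → ℝ, ∃ t : Fin k → V,
    (∀ i, 0 < lam i ∧ lam i < 1) ∧
    (K ⊆ ⋃ i, (fun x => lam i • x + t i) '' K) ∧
    r = ∑ i, 1 / (1 - lam i)}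

/-- The (multiplicative) Banach–Mazur distance. -/
noncomputable def distBM {d : ℕ} (K L : Set (Fin d → ℝ)) : ℝ :=
  sInf {δ : ℝ | 1 ≤ δ ∧ ∃ T : (Fin d → ℝ) ≃ₗ[ℝ] (Fin d → ℝ), ∃ a ∈ K, ∃ b ∈ L,
    (fun x => x - b) '' L ⊆ T '' ((fun x => x - a) '' K) ∧
    T '' ((fun x => x - a) '' K) ⊆ δ • ((fun x => x - b) '' L)}

end Defs

/-!
`γ_m` is invariant under invertible affine maps, which reduces the claim to sets of one space with
`L ⊆ K ⊆ δ • L`. There a covering of either set by homothets of ratio `λ` yields one of the other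
by homothets of ratio `δ * λ`, so each of `γ_m(K)` and `γ_m(L)` is at most `δ` times the other. As
both are at most `1`, they differ by at most `δ - 1`.
-/

section CoveringNumber

variable {V W : Type*} [NormedAddCommGroup V] [NormedSpace ℝ V]
  [NormedAddCommGroup W] [NormedSpace ℝ W] {K L : Set V} {lam r s δ : ℝ} {m : ℕ}

theorem coversWith_one (K : Set V) (hm : 0 < m) : CoversWith K 1 m :=
  ⟨fun _ => 0, fun x hx => mem_iUnion.2 ⟨⟨0, hm⟩, x, hx, by simp⟩⟩

theorem CoversWith.image (h : CoversWith K lam m) (f : V →ᵃ[ℝ] W) :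
    CoversWith (f '' K) lam m := by
  obtain ⟨t, ht⟩ := h
  refine ⟨fun i => f (t i) - lam • f 0, ?_⟩
  rintro _ ⟨x, hx, rfl⟩
  obtain ⟨i, z, hz, rfl⟩ := mem_iUnion.1 (ht hx)
  have f_eq (v : V) : f v = f.linear v + f 0 := congrFun f.decomp v
  refine mem_iUnion.2 ⟨i, f z, mem_image_of_mem f hz, ?_⟩
  change lam • f z + (f (t i) - lam • f 0) = f (lam • z + t i)
  rw [f_eq (lam • z + t i), f_eq z, f_eq (t i), map_add, map_smul]
  module

theorem CoversWith.of_subset_smul (h : CoversWith L lam m) (hKL : K ⊆ r • L) (hLK : L ⊆ s • K) :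
    CoversWith K (r * s * lam) m := by
  obtain ⟨t, ht⟩ := h
  refine ⟨fun i => r • t i, fun x hx => ?_⟩
  obtain ⟨y, hy, rfl⟩ := hKL hx
  obtain ⟨i, z, hz, rfl⟩ := mem_iUnion.1 (ht hy)
  obtain ⟨w, hw, rfl⟩ := hLK hz
  refine mem_iUnion.2 ⟨i, w, hw, ?_⟩
  change (r * s * lam) • w + r • t i = r • (lam • s • w + t i)
  module

theorem gammaC_le (hlam : 0 < lam) (h : CoversWith K lam m) : gammaC m K ≤ lam :=
  csInf_le ⟨0, fun _ hr => hr.1.le⟩ ⟨hlam, h⟩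

theorem le_gammaC (hm : 0 < m) (h : ∀ lam, 0 < lam → CoversWith K lam m → r ≤ lam) :
    r ≤ gammaC m K :=
  le_csInf ⟨1, one_pos, coversWith_one K hm⟩ fun lam hlam => h lam hlam.1 hlam.2

theorem gammaC_le_one (K : Set V) (hm : 0 < m) : gammaC m K ≤ 1 :=
  gammaC_le one_pos (coversWith_one K hm)

theorem gammaC_image_affineEquiv (e : V ≃ᵃ[ℝ] W) (K : Set V) (m : ℕ) :
    gammaC m (e '' K) = gammaC m K := by
  have coversWith_iff (lam : ℝ) : CoversWith (e '' K) lam m ↔ CoversWith K lam m := by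
    refine ⟨fun h => ?_, fun h => h.image e.toAffineMap⟩
    simpa [image_image] using h.image e.symm.toAffineMap
  simp only [gammaC, coversWith_iff]

theorem gammaC_image_sub_const (K : Set V) (a : V) (m : ℕ) :
    gammaC m ((fun x => x - a) '' K) = gammaC m K :=
  gammaC_image_affineEquiv (AffineEquiv.vaddConst ℝ a).symm K m

theorem gammaC_image_linearEquiv (T : V ≃ₗ[ℝ] W) (K : Set V) (m : ℕ) :
    gammaC m (T '' K) = gammaC m K :=
  gammaC_image_affineEquiv T.toAffineEquiv K m

theorem gammaC_le_mul_of_subset_smul (hrs : 0 < r * s) (hKL : K ⊆ r • L) (hLK : L ⊆ s • K)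
    (hm : 0 < m) : gammaC m K ≤ r * s * gammaC m L := by
  rw [← div_le_iff₀' hrs]
  refine le_gammaC hm fun lam hlam h => ?_
  rw [div_le_iff₀' hrs]
  exact gammaC_le (mul_pos hrs hlam) (h.of_subset_smul hKL hLK)

theorem abs_gammaC_sub_le_of_subset_of_subset_smul (hδ : 1 ≤ δ) (hLK : L ⊆ K) (hKL : K ⊆ δ • L)
    (hm : 0 < m) : |gammaC m K - gammaC m L| ≤ δ - 1 := by
  have hδ₀ : 0 < δ := one_pos.trans_le hδ
  have hLK' : L ⊆ (1 : ℝ) • K := by rwa [one_smul]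
  have hK : gammaC m K ≤ δ * gammaC m L := by
    simpa only [mul_one] using gammaC_le_mul_of_subset_smul (mul_pos hδ₀ one_pos) hKL hLK' hm
  have hL : gammaC m L ≤ δ * gammaC m K := by
    simpa only [one_mul] using gammaC_le_mul_of_subset_smul (mul_pos one_pos hδ₀) hLK' hKL hm
  have sub_le {x y : ℝ} (hxy : x ≤ δ * y) (hy : y ≤ 1) : x - y ≤ δ - 1 :=
    calc x - y ≤ (δ - 1) * y := by linarith
      _ ≤ δ - 1 := mul_le_of_le_one_right (sub_nonneg.2 hδ) hy
  exact abs_sub_le_iff.2 ⟨sub_le hK (gammaC_le_one L hm), sub_le hL (gammaC_le_one K hm)⟩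

theorem abs_gammaC_sub_le_of_sandwich_general {K : Set V} {L : Set W} {a : V} {b : W} (hδ : 1 ≤ δ)
    (T : V ≃ₗ[ℝ] W) (hLK : (fun x => x - b) '' L ⊆ T '' ((fun x => x - a) '' K))
    (hKL : T '' ((fun x => x - a) '' K) ⊆ δ • ((fun x => x - b) '' L)) (hm : 0 < m) :
    |gammaC m K - gammaC m L| ≤ δ - 1 := by
  rw [← gammaC_image_sub_const K a, ← gammaC_image_linearEquiv T, ← gammaC_image_sub_const L b]
  exact abs_gammaC_sub_le_of_subset_of_subset_smul hδ hLK hKL hm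

end CoveringNumber

/-- `|γ_m(K) − γ_m(L)| ≤ δ − 1` under a Banach–Mazur sandwich. -/
theorem abs_gammaC_sub_le_of_sandwich (d : ℕ) (K L : Set (Fin d → ℝ))
    (hK : IsConvexBody K) (hL : IsConvexBody L)
    (a : Fin d → ℝ) (ha : a ∈ K) (b : Fin d → ℝ) (hb : b ∈ L)
    (δ : ℝ) (hδ : 1 ≤ δ) (T : (Fin d → ℝ) ≃ₗ[ℝ] (Fin d → ℝ))
    (h1 : (fun x => x - b) '' L ⊆ T '' ((fun x => x - a) '' K))
    (h2 : T '' ((fun x => x - a) '' K) ⊆ δ • ((fun x => x - b) '' L))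
    (m : ℕ) (hm : 0 < m) :
    |gammaC m K - gammaC m L| ≤ δ - 1 :=
  abs_gammaC_sub_le_of_sandwich_general hδ T h1 h2 hm
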